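/- For every n ≥ 1, K_G^+(ℓ_∞^n, ℓ_∞^n) ≥ ρ^+(ℓ_1^n); moreover there exists a constant c > 0 such that ρ^+(ℓ_1^n) ≥ c√n for all sufficiently large n. -/

import Mathlib

/-!
The idea is that `ℓ₁ⁿ ⊗ ℓ₁ⁿ` has the concrete norms `‖z‖_∧ = ∑ |z_ab|` and
`‖z‖_∨ = ‖z : ℓ_∞ⁿ → ℓ₁ⁿ‖`.

*Comparison.* A non-negative `z ∈ ℓ₁ⁿ ⊗ ℓ₁ⁿ` of injective norm at most one is also a non-negative
contraction `A : ℓ_∞ⁿ → (ℓ_∞ⁿ)*`.  Let `s` be the sign matrix of `z`, which has norm at most one in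
`ℓ_∞ⁿ ⊗̌ ℓ_∞ⁿ`.  Then `(A ⊗ id) s` is an operator on `ℓ_∞ⁿ` with trace `∑ |z_ab| = ‖z‖_∧`, and the
trace is dominated by the nuclear norm (`trace_le_projNorm`).

*Growth.* Let `S` be the matrix of the discrete Hartley transform: it is symmetric and orthogonal,
with all entries bounded by `2 / √n`.  Hence `z = (1 + S) / (2n)` is a multiple of an orthogonal
projection, so it is non-negative; by Cauchy-Schwarz its norm from `ℓ_∞ⁿ` to `ℓ₁ⁿ` is at most one;
and since `S` has flat entries, `∑ |z_ab| ≥ √n / 4 - 1 / 2`.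
-/


open scoped BigOperators

/-- The projective tensor norm of the element of `X* ⊗ F` corresponding (via the canonical
identification, `X` finite dimensional) to the continuous linear map `u : X → F`. -/
noncomputable def projNorm {X F : Type*} [NormedAddCommGroup X] [NormedSpace ℝ X]
    [NormedAddCommGroup F] [NormedSpace ℝ F] (u : X →L[ℝ] F) : ℝ :=
  sInf { r : ℝ | ∃ (k : ℕ) (η : Fin k → (X →L[ℝ] ℝ)) (f : Fin k → F),
    (∀ x, u x = ∑ i, η i x • f i) ∧ r = ∑ i, ‖η i‖ * ‖f i‖ }

/-- The Grothendieck constant `K_G(E,F)`.  An element of `E ⊗ F` is encoded as a map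
`u : E* → F`, an element of `E* ⊗ F` as a map `E → F`, and `A ⊗ id_F` sends `u` to
`u ∘ Aᵀ`, where `Aᵀ = A.flip : E → E*`. -/
noncomputable def KG (E F : Type*) [NormedAddCommGroup E] [NormedSpace ℝ E]
    [NormedAddCommGroup F] [NormedSpace ℝ F] : ℝ :=
  sSup { r : ℝ | ∃ (A : E →L[ℝ] (E →L[ℝ] ℝ)) (u : (E →L[ℝ] ℝ) →L[ℝ] F),
    ‖A‖ ≤ 1 ∧ ‖u‖ ≤ 1 ∧ r = projNorm (u.comp A.flip) }

/-- `ρ(E,F)`: the norm of the identity from `E ⊗̌ F` to `E ⊗̂ F`. -/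
noncomputable def rho (E F : Type*) [NormedAddCommGroup E] [NormedSpace ℝ E]
    [NormedAddCommGroup F] [NormedSpace ℝ F] : ℝ :=
  sSup { r : ℝ | ∃ u : (E →L[ℝ] ℝ) →L[ℝ] F, ‖u‖ ≤ 1 ∧ r = projNorm u }

/-- `A : E → E*` is non-negative: the corresponding tensor in `E* ⊗ E*` is a (finite) sum of
symmetric tensors `η ⊗ η`, i.e. lies in the convex hull of such tensors. -/
def IsNonnegMap {E : Type*} [NormedAddCommGroup E] [NormedSpace ℝ E]
    (A : E →L[ℝ] (E →L[ℝ] ℝ)) : Prop :=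
  ∃ (k : ℕ) (η : Fin k → (E →L[ℝ] ℝ)), ∀ x, A x = ∑ i, η i x • η i

/-- A tensor `z ∈ E ⊗ E` (encoded as a map `E* → E`) is non-negative if it is a finite sum of
symmetric tensors `e ⊗ e`. -/
def IsNonnegTensor {E : Type*} [NormedAddCommGroup E] [NormedSpace ℝ E]
    (z : (E →L[ℝ] ℝ) →L[ℝ] E) : Prop :=
  ∃ (k : ℕ) (e : Fin k → E), ∀ φ, z φ = ∑ i, φ (e i) • e i

/-- The positive Grothendieck constant `K_G⁺(E,F)`. -/
noncomputable def KGpos (E F : Type*) [NormedAddCommGroup E] [NormedSpace ℝ E]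
    [NormedAddCommGroup F] [NormedSpace ℝ F] : ℝ :=
  sSup { r : ℝ | ∃ (A : E →L[ℝ] (E →L[ℝ] ℝ)) (u : (E →L[ℝ] ℝ) →L[ℝ] F),
    IsNonnegMap A ∧ ‖A‖ ≤ 1 ∧ ‖u‖ ≤ 1 ∧ r = projNorm (u.comp A.flip) }

/-- The factorization constant `f(X,E)` of `X` through `E`. -/
noncomputable def factConst (X E : Type*) [NormedAddCommGroup X] [NormedSpace ℝ X]
    [NormedAddCommGroup E] [NormedSpace ℝ E] : ℝ :=
  sInf { r : ℝ | ∃ (u : X →L[ℝ] E) (v : E →L[ℝ] X),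
    v.comp u = ContinuousLinearMap.id ℝ X ∧ r = ‖u‖ * ‖v‖ }

/-- `γ(E) = sup { tr(BA) : A ≥ 0, B ≥ 0, ‖A‖ ≤ 1, ‖B‖ ≤ 1 }`. -/
noncomputable def gammaConst (E : Type*) [NormedAddCommGroup E] [NormedSpace ℝ E] : ℝ :=
  sSup { r : ℝ | ∃ (A : E →L[ℝ] (E →L[ℝ] ℝ)) (B : (E →L[ℝ] ℝ) →L[ℝ] E),
    IsNonnegMap A ∧ IsNonnegTensor B ∧ ‖A‖ ≤ 1 ∧ ‖B‖ ≤ 1 ∧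
    r = LinearMap.trace ℝ E ((B.comp A : E →L[ℝ] E) : E →ₗ[ℝ] E) }

/-- `ρ⁺(E)`: as `ρ(E,E)` but the supremum is restricted to non-negative tensors. -/
noncomputable def rhoPlus (E : Type*) [NormedAddCommGroup E] [NormedSpace ℝ E] : ℝ :=
  sSup { r : ℝ | ∃ z : (E →L[ℝ] ℝ) →L[ℝ] E,
    IsNonnegTensor z ∧ ‖z‖ ≤ 1 ∧ r = projNorm z }

/-- `X` has (Rademacher) cotype `q`. -/
def HasCotype (X : Type*) [NormedAddCommGroup X] [NormedSpace ℝ X] (q : ℝ) : Prop :=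
  ∃ C > 0, ∀ (n : ℕ) (x : Fin n → X),
    (∑ i, ‖x i‖ ^ q) ^ (1/q) ≤
      C * (((2 : ℝ) ^ n)⁻¹ *
        ∑ ε : Fin n → Bool, ‖∑ i, (if ε i then (1:ℝ) else -1) • x i‖ ^ 2) ^ (1/2 : ℝ)

open scoped ENNReal

namespace Statement17

/-- The space `ℓ₁ⁿ`. -/
abbrev L1 (n : ℕ) := PiLp 1 fun _ : Fin n => ℝ

/-- The space `ℓ_∞ⁿ`. -/
abbrev Linf (n : ℕ) := PiLp ⊤ fun _ : Fin n => ℝ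

/-! ### Projective norms -/

section Proj

variable {X F : Type*} [NormedAddCommGroup X] [NormedSpace ℝ X]
  [NormedAddCommGroup F] [NormedSpace ℝ F]

lemma projNorm_le (u : X →L[ℝ] F) {k : ℕ} (η : Fin k → (X →L[ℝ] ℝ)) (f : Fin k → F)
    (h : ∀ x, u x = ∑ i, η i x • f i) : projNorm u ≤ ∑ i, ‖η i‖ * ‖f i‖ := by
  refine csInf_le ⟨0, ?_⟩ ⟨k, η, f, h, rfl⟩
  rintro r ⟨k, η, f, -, rfl⟩
  positivity

/-- For finite dimensional `X` the projective norm is controlled by the operator norm; this makes the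
suprema defining `KGpos` and `rhoPlus` suprema of bounded sets. -/
lemma exists_projNorm_le (X F : Type*) [NormedAddCommGroup X] [NormedSpace ℝ X]
    [NormedAddCommGroup F] [NormedSpace ℝ F] [FiniteDimensional ℝ X] :
    ∃ C : ℝ, 0 ≤ C ∧ ∀ u : X →L[ℝ] F, projNorm u ≤ C * ‖u‖ := by
  let b := Module.finBasis ℝ X
  let c : Fin (Module.finrank ℝ X) → (X →L[ℝ] ℝ) := fun i => (b.coord i).toContinuousLinearMap
  refine ⟨∑ i, ‖c i‖ * ‖b i‖, by positivity, fun u => ?_⟩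
  refine (projNorm_le u c (fun i => u (b i)) fun x => ?_).trans ?_
  · conv_lhs => rw [← b.sum_repr x, map_sum]
    simp only [map_smul]
    rfl
  · rw [Finset.sum_mul]
    refine Finset.sum_le_sum fun i _ => ?_
    rw [mul_assoc, mul_comm ‖b i‖]
    gcongr
    exact u.le_opNorm _

/-- A bound valid for every representation bounds `projNorm` from below. Finite dimensionality of `X`
ensures that a representation exists, so that the infimum is not the junk value `sInf ∅ = 0`. -/
lemma le_projNorm [FiniteDimensional ℝ X] (u : X →L[ℝ] F) (t : ℝ)
    (h : ∀ (k : ℕ) (η : Fin k → (X →L[ℝ] ℝ)) (f : Fin k → F),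
      (∀ x, u x = ∑ i, η i x • f i) → t ≤ ∑ i, ‖η i‖ * ‖f i‖) : t ≤ projNorm u := by
  let b := Module.finBasis ℝ X
  refine le_csInf ⟨_, _, fun i => (b.coord i).toContinuousLinearMap, fun i => u (b i), fun x => ?_,
    rfl⟩ ?_
  · conv_lhs => rw [← b.sum_repr x, map_sum]
    simp only [map_smul]
    rfl
  · rintro r ⟨k, η, f, hu, rfl⟩
    exact h k η f hu

end Proj

/-! ### The duality between `ℓ₁ⁿ` and `ℓ_∞ⁿ` -/

variable {n : ℕ}

lemma norm_L1 (e : L1 n) : ‖e‖ = ∑ a, |e a| := by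
  simp [PiLp.norm_eq_of_L1]

lemma abs_le_norm_Linf (x : Linf n) (a : Fin n) : |x a| ≤ ‖x‖ := by
  simpa using PiLp.norm_apply_le x a

lemma norm_Linf_le (x : Linf n) {C : ℝ} (hC : 0 ≤ C) (h : ∀ a, |x a| ≤ C) : ‖x‖ ≤ C := by
  rw [PiLp.norm_eq_ciSup]
  exact Real.iSup_le (by simpa using h) hC

/-- The canonical contraction `ℓ_∞ⁿ → (ℓ₁ⁿ)*`. -/
noncomputable def pairing (n : ℕ) : Linf n →L[ℝ] (L1 n →L[ℝ] ℝ) :=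
  LinearMap.mkContinuous₂
    (LinearMap.mk₂ ℝ (fun (x : Linf n) (e : L1 n) => ∑ a, x a * e a)
      (by intros; simp [add_mul, Finset.sum_add_distrib])
      (by intros; simp [Finset.mul_sum, mul_assoc])
      (by intros; simp [mul_add, Finset.sum_add_distrib])
      (by intros; simp [Finset.mul_sum, mul_left_comm]))
    1 (by
      intro x e
      simp only [LinearMap.mk₂_apply, one_mul, norm_L1, Real.norm_eq_abs]
      refine (Finset.abs_sum_le_sum_abs _ _).trans ?_
      rw [Finset.mul_sum]
      refine Finset.sum_le_sum fun a _ => ?_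
      rw [abs_mul]
      gcongr
      exact abs_le_norm_Linf x a)

lemma pairing_apply (x : Linf n) (e : L1 n) : pairing n x e = ∑ a, x a * e a := rfl

lemma norm_pairing_le : ‖pairing n‖ ≤ 1 :=
  LinearMap.mkContinuous₂_norm_le _ zero_le_one _

lemma norm_pairing_apply_le (x : Linf n) : ‖pairing n x‖ ≤ ‖x‖ := by
  simpa using (pairing n).le_of_opNorm_le norm_pairing_le x

/-- The unit vectors of `ℓ_∞ⁿ`. -/
noncomputable def dInf (a : Fin n) : Linf n := WithLp.toLp ⊤ (Pi.single a 1)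

/-- The unit vectors of `ℓ₁ⁿ`. -/
noncomputable def d1 (a : Fin n) : L1 n := WithLp.toLp 1 (Pi.single a 1)

lemma pairing_dInf (b : Fin n) (e : L1 n) : pairing n (dInf b) e = e b := by
  simp [pairing_apply, dInf]

lemma norm_d1 (b : Fin n) : ‖d1 b‖ = 1 := by
  simp [d1]

lemma sum_dInf (x : Linf n) : x = ∑ a, x a • dInf a := by
  ext i; simp [dInf, Pi.single_apply]

lemma sum_d1 (e : L1 n) : e = ∑ a, e a • d1 a := by
  ext i; simp [d1, Pi.single_apply]

lemma sum_functional (φ : L1 n →L[ℝ] ℝ) : φ = ∑ b, φ (d1 b) • pairing n (dInf b) := by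
  ext e
  conv_lhs => rw [sum_d1 e]
  simp [pairing_dInf, mul_comm]

/-- The entry `(a, b)` of the matrix of a tensor `z ∈ ℓ₁ⁿ ⊗ ℓ₁ⁿ`. -/
noncomputable def entry (z : (L1 n →L[ℝ] ℝ) →L[ℝ] L1 n) (a b : Fin n) : ℝ :=
  z (pairing n (dInf b)) a

lemma projNorm_le_entries (z : (L1 n →L[ℝ] ℝ) →L[ℝ] L1 n) :
    projNorm z ≤ ∑ b, ∑ a, |entry z a b| := by
  refine (projNorm_le z (fun b => ContinuousLinearMap.apply ℝ ℝ (d1 b))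
    (fun b => z (pairing n (dInf b))) fun φ => ?_).trans ?_
  · conv_lhs => rw [sum_functional φ]
    simp
  · refine Finset.sum_le_sum fun b _ => ?_
    have h1 : ‖ContinuousLinearMap.apply ℝ ℝ (d1 b)‖ ≤ 1 := by
      refine ContinuousLinearMap.opNorm_le_bound _ zero_le_one fun φ => ?_
      simpa [norm_d1] using φ.le_opNorm (d1 b)
    have h2 : ‖z (pairing n (dInf b))‖ = ∑ a, |entry z a b| := norm_L1 _
    rw [h2]
    exact mul_le_of_le_one_left (by positivity) h1

/-- Duality of the projective norm on `ℓ₁ⁿ ⊗ ℓ₁ⁿ` with sign matrices. -/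
lemma entries_le_projNorm (z : (L1 n →L[ℝ] ℝ) →L[ℝ] L1 n) (s : Fin n → Fin n → ℝ)
    (hs : ∀ a b, |s a b| ≤ 1) :
    ∑ a, ∑ b, s a b * entry z a b ≤ projNorm z := by
  refine le_projNorm _ _ fun k η f hz => ?_
  have hrow : ∀ a, ‖pairing n (WithLp.toLp ⊤ (s a))‖ ≤ 1 := fun a =>
    (norm_pairing_apply_le _).trans (norm_Linf_le _ zero_le_one (hs a))
  have hexp : ∀ a, pairing n (WithLp.toLp ⊤ (s a)) = ∑ b, s a b • pairing n (dInf b) := by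
    intro a
    conv_lhs => rw [sum_dInf (WithLp.toLp ⊤ (s a) : Linf n)]
    simp
  have key : ∑ a, ∑ b, s a b * entry z a b
      = ∑ i, ∑ a, η i (pairing n (WithLp.toLp ⊤ (s a))) * f i a := by
    rw [Finset.sum_comm (s := (Finset.univ : Finset (Fin k)))]
    refine Finset.sum_congr rfl fun a _ => ?_
    simp only [hexp, entry, hz, map_sum, map_smul]
    simp only [WithLp.ofLp_sum, WithLp.ofLp_smul, Finset.sum_apply, Pi.smul_apply, smul_eq_mul,
      Finset.mul_sum, Finset.sum_mul]
    rw [Finset.sum_comm]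
    simp only [mul_assoc]
  rw [key]
  refine Finset.sum_le_sum fun i _ => ?_
  rw [norm_L1, Finset.mul_sum]
  refine Finset.sum_le_sum fun a _ => ?_
  refine (le_abs_self _).trans ?_
  rw [abs_mul]
  gcongr
  simpa using (η i).le_of_opNorm_le_of_le le_rfl (hrow a)

/-- On `ℓ_∞ⁿ`, the projective norm of an endomorphism (its nuclear norm) dominates its trace. -/
lemma trace_le_projNorm (v : Linf n →L[ℝ] Linf n) :
    ∑ a, v (dInf a) a ≤ projNorm v := by
  refine le_projNorm _ _ fun k η f hv => ?_
  have key : ∑ a, v (dInf a) a = ∑ i, η i (f i) := by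
    have : ∀ i, η i (f i) = ∑ a, η i (dInf a) * f i a := by
      intro i
      conv_lhs => rw [sum_dInf (f i)]
      simp [mul_comm]
    simp only [this, hv]
    rw [Finset.sum_comm]
    simp
  rw [key]
  exact Finset.sum_le_sum fun i _ => (le_abs_self _).trans ((η i).le_opNorm _)

/-! ### Comparison of `K_G⁺(ℓ_∞ⁿ, ℓ_∞ⁿ)` and `ρ⁺(ℓ₁ⁿ)` -/

/-- The map `(ℓ_∞ⁿ)* → ℓ_∞ⁿ` with matrix `s`. -/
noncomputable def signMap (s : Fin n → Fin n → ℝ) (hs : ∀ a b, |s a b| ≤ 1) :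
    (Linf n →L[ℝ] ℝ) →L[ℝ] Linf n :=
  LinearMap.mkContinuous
    { toFun := fun ψ => WithLp.toLp ⊤ fun a => ψ (WithLp.toLp ⊤ (s a))
      map_add' := by intros; ext; simp
      map_smul' := by intros; ext; simp }
    1 (by
      intro ψ
      rw [one_mul]
      refine norm_Linf_le _ (norm_nonneg _) fun a => ?_
      simpa using ψ.le_of_opNorm_le_of_le le_rfl
        (norm_Linf_le (WithLp.toLp ⊤ (s a)) zero_le_one (hs a)))

lemma norm_signMap_le (s : Fin n → Fin n → ℝ) (hs : ∀ a b, |s a b| ≤ 1) : ‖signMap s hs‖ ≤ 1 :=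
  LinearMap.mkContinuous_norm_le _ zero_le_one _

lemma signMap_apply (s : Fin n → Fin n → ℝ) (hs : ∀ a b, |s a b| ≤ 1) (ψ : Linf n →L[ℝ] ℝ)
    (a : Fin n) : signMap s hs ψ a = ∑ b, s a b * ψ (dInf b) := by
  change ψ (WithLp.toLp ⊤ (s a)) = _
  conv_lhs => rw [sum_dInf (WithLp.toLp ⊤ (s a) : Linf n)]
  simp

lemma bddAbove_KGpos (n : ℕ) :
    BddAbove { r : ℝ | ∃ (A : Linf n →L[ℝ] (Linf n →L[ℝ] ℝ)) (u : (Linf n →L[ℝ] ℝ) →L[ℝ] Linf n),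
      IsNonnegMap A ∧ ‖A‖ ≤ 1 ∧ ‖u‖ ≤ 1 ∧ r = projNorm (u.comp A.flip) } := by
  obtain ⟨C, hC, h⟩ := exists_projNorm_le (Linf n) (Linf n)
  refine ⟨C, ?_⟩
  rintro r ⟨A, u, -, hA, hu, rfl⟩
  refine (h _).trans (mul_le_of_le_one_right hC ?_)
  refine (ContinuousLinearMap.opNorm_comp_le _ _).trans ?_
  rw [ContinuousLinearMap.opNorm_flip]
  exact mul_le_one₀ hu (by positivity) hA

lemma bddAbove_rhoPlus (n : ℕ) :
    BddAbove { r : ℝ | ∃ z : (L1 n →L[ℝ] ℝ) →L[ℝ] L1 n,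
      IsNonnegTensor z ∧ ‖z‖ ≤ 1 ∧ r = projNorm z } := by
  obtain ⟨C, hC, h⟩ := exists_projNorm_le (L1 n →L[ℝ] ℝ) (L1 n)
  refine ⟨C, ?_⟩
  rintro r ⟨z, -, hz, rfl⟩
  exact (h _).trans (mul_le_of_le_one_right hC hz)

theorem rhoPlus_le_KGpos (n : ℕ) : rhoPlus (L1 n) ≤ KGpos (Linf n) (Linf n) := by
  refine csSup_le ⟨projNorm 0, 0, ⟨0, Fin.elim0, fun φ => by simp⟩,
    ContinuousLinearMap.opNorm_zero.trans_le zero_le_one, rfl⟩ ?_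
  rintro r ⟨z, ⟨k, e, hz⟩, hz1, rfl⟩
  let s : Fin n → Fin n → ℝ := fun a b => SignType.sign (entry z a b)
  have hs : ∀ a b, |s a b| ≤ 1 := by
    intro a b
    rcases lt_trichotomy (entry z a b) 0 with h | h | h <;> simp [s, h]
  let A : Linf n →L[ℝ] (Linf n →L[ℝ] ℝ) := (pairing n).flip.comp (z.comp (pairing n))
  have hA : ‖A‖ ≤ 1 := by
    refine (ContinuousLinearMap.opNorm_comp_le _ _).trans ?_
    rw [ContinuousLinearMap.opNorm_flip]
    refine mul_le_one₀ norm_pairing_le (norm_nonneg _) ?_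
    exact (ContinuousLinearMap.opNorm_comp_le _ _).trans
      (mul_le_one₀ hz1 (norm_nonneg _) norm_pairing_le)
  have hApos : IsNonnegMap A := by
    refine ⟨k, fun i => (pairing n).flip (e i), fun x => ?_⟩
    simp [A, hz]
  refine le_trans ?_ (le_csSup (bddAbove_KGpos n) ⟨A, signMap s hs, hApos, hA,
    norm_signMap_le s hs, rfl⟩)
  refine (projNorm_le_entries z).trans (le_trans (le_of_eq ?_) (trace_le_projNorm _))
  rw [Finset.sum_comm]
  refine Finset.sum_congr rfl fun a _ => ?_
  simp only [ContinuousLinearMap.comp_apply, signMap_apply]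
  refine Finset.sum_congr rfl fun b _ => ?_
  simp only [A, ContinuousLinearMap.flip_apply, ContinuousLinearMap.comp_apply, pairing_dInf]
  exact (sign_mul_self _).symm

/-! ### A flat symmetric orthogonal matrix -/

/-- The geometric sum of a nontrivial `n`-th root of unity over a full period vanishes. -/
lemma sum_exp (hn : 0 < n) (m : ℤ) (hm : ¬ (n : ℤ) ∣ m) :
    ∑ j : Fin n, Complex.exp ((2 * Real.pi * m * (j : ℕ) / n : ℝ) * Complex.I) = 0 := by
  have hn' : (n : ℂ) ≠ 0 := by exact_mod_cast hn.ne'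
  set w : ℂ := Complex.exp (2 * Real.pi * m / n * Complex.I) with hw
  have h1 : w ≠ 1 := by
    intro h
    obtain ⟨l, hl⟩ := Complex.exp_eq_one_iff.1 h
    apply hm
    refine ⟨l, ?_⟩
    have hpi : (Real.pi : ℂ) ≠ 0 := by exact_mod_cast Real.pi_ne_zero
    have : (m : ℂ) = n * l := by
      field_simp at hl
      linear_combination hl
    exact_mod_cast this
  have h2 : w ^ n = 1 := by
    rw [hw, ← Complex.exp_nat_mul, Complex.exp_eq_one_iff]
    exact ⟨m, by field_simp⟩
  have h3 : ∑ j ∈ Finset.range n, w ^ j = 0 := by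
    have := mul_neg_geom_sum w n
    rw [h2, sub_self] at this
    exact (mul_eq_zero.1 this).resolve_left (sub_ne_zero.2 h1.symm)
  rw [← h3, ← Fin.sum_univ_eq_sum_range (fun j => w ^ j)]
  refine Finset.sum_congr rfl fun j _ => ?_
  rw [hw, ← Complex.exp_nat_mul]
  congr 1
  push_cast
  ring

lemma sum_cos (hn : 0 < n) (m : ℤ) (hm : ¬ (n : ℤ) ∣ m) :
    ∑ j : Fin n, Real.cos (2 * Real.pi * m * (j : ℕ) / n) = 0 := by
  simpa only [Complex.re_sum, Complex.exp_ofReal_mul_I_re, Complex.zero_re]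
    using congrArg Complex.re (sum_exp hn m hm)

lemma sum_sin (hn : 0 < n) (m : ℤ) :
    ∑ j : Fin n, Real.sin (2 * Real.pi * m * (j : ℕ) / n) = 0 := by
  by_cases hm : (n : ℤ) ∣ m
  · obtain ⟨l, rfl⟩ := hm
    refine Finset.sum_eq_zero fun j _ => ?_
    rw [Real.sin_eq_zero_iff]
    refine ⟨2 * l * (j : ℕ), ?_⟩
    push_cast
    field_simp
  · simpa only [Complex.im_sum, Complex.exp_ofReal_mul_I_im, Complex.zero_im]
      using congrArg Complex.im (sum_exp hn m hm)

/-- The matrix of the normalized discrete Hartley transform,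
`n^{-1/2} (cos (2πij/n) + sin (2πij/n))`. -/
noncomputable def hartley (i j : Fin n) : ℝ :=
  (Real.cos (2 * Real.pi * (i : ℕ) * (j : ℕ) / n) +
    Real.sin (2 * Real.pi * (i : ℕ) * (j : ℕ) / n)) / Real.sqrt n

lemma hartley_symm (i j : Fin n) : hartley i j = hartley j i := by
  simp only [hartley, mul_right_comm]

lemma hartley_orthogonal (hn : 0 < n) (i k : Fin n) :
    ∑ j, hartley i j * hartley k j = if i = k then 1 else 0 := by
  have hn' : (0 : ℝ) < n := by exact_mod_cast hn
  have h : ∀ j : Fin n, hartley i j * hartley k j =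
      (Real.cos (2 * Real.pi * ((i : ℤ) - (k : ℤ) : ℤ) * (j : ℕ) / n) +
        Real.sin (2 * Real.pi * ((i : ℤ) + (k : ℤ) : ℤ) * (j : ℕ) / n)) / n := by
    intro j
    rw [hartley, hartley, div_mul_div_comm, Real.mul_self_sqrt hn'.le]
    have e1 : 2 * Real.pi * ((i : ℤ) - (k : ℤ) : ℤ) * (j : ℕ) / n =
        2 * Real.pi * (i : ℕ) * (j : ℕ) / n - 2 * Real.pi * (k : ℕ) * (j : ℕ) / n := by
      push_cast; ring
    have e2 : 2 * Real.pi * ((i : ℤ) + (k : ℤ) : ℤ) * (j : ℕ) / n =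
        2 * Real.pi * (i : ℕ) * (j : ℕ) / n + 2 * Real.pi * (k : ℕ) * (j : ℕ) / n := by
      push_cast; ring
    rw [e1, e2, Real.cos_sub, Real.sin_add]
    ring
  simp only [h]
  rw [← Finset.sum_div, Finset.sum_add_distrib, sum_sin hn, add_zero]
  split_ifs with hik
  · subst hik
    simp [hn'.ne']
  · rw [sum_cos hn, zero_div]
    intro hd
    apply hik
    have := Int.eq_zero_of_abs_lt_dvd hd (by
      have := i.2; have := k.2
      rw [abs_lt]; constructor <;> omega)
    ext; omega

lemma sum_abs_hartley (hn : 0 < n) (i : Fin n) :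
    Real.sqrt n / 2 ≤ ∑ j, |hartley i j| := by
  have hs : 0 < Real.sqrt n := Real.sqrt_pos.2 (by exact_mod_cast hn)
  have h1 := hartley_orthogonal hn i i
  rw [if_pos rfl] at h1
  -- the entries are at most `2 / √n`, so `√n S² ≤ 2 |S|`, and the rows are unit vectors
  have h2 : ∀ j, hartley i j * hartley i j * (Real.sqrt n / 2) ≤ |hartley i j| := by
    intro j
    have hb : |hartley i j| * (Real.sqrt n / 2) ≤ 1 := by
      rw [hartley, abs_div, abs_of_pos hs]
      field_simp
      exact (abs_add_le _ _).trans (by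
        linarith [Real.abs_cos_le_one (2 * Real.pi * (i : ℕ) * (j : ℕ) / n),
          Real.abs_sin_le_one (2 * Real.pi * (i : ℕ) * (j : ℕ) / n)])
    rw [← abs_mul_abs_self, mul_assoc]
    exact mul_le_of_le_one_right (abs_nonneg _) hb
  calc Real.sqrt n / 2 = ∑ j, hartley i j * hartley i j * (Real.sqrt n / 2) := by
        rw [← Finset.sum_mul, h1, one_mul]
    _ ≤ _ := Finset.sum_le_sum fun j _ => h2 j

/-- Since the Hartley matrix is orthogonal, Cauchy-Schwarz bounds its norm from `ℓ_∞ⁿ` to `ℓ₁ⁿ`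
by `n`. -/
lemma sum_abs_hartley_apply_le (hn : 0 < n) (x : Fin n → ℝ) {C : ℝ} (hC : 0 ≤ C)
    (hx : ∀ i, |x i| ≤ C) : ∑ i, |∑ j, hartley i j * x j| ≤ n * C := by
  have h1 : ∑ i, (∑ j, hartley i j * x j) ^ 2 = ∑ j, x j ^ 2 := by
    calc ∑ i, (∑ j, hartley i j * x j) ^ 2
        = ∑ i, ∑ j, ∑ k, x j * x k * (hartley j i * hartley k i) := by
          refine Finset.sum_congr rfl fun i _ => ?_
          rw [sq, Finset.sum_mul_sum]
          refine Finset.sum_congr rfl fun j _ => Finset.sum_congr rfl fun k _ => ?_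
          rw [hartley_symm i j, hartley_symm i k]
          ring
      _ = ∑ j, ∑ k, x j * x k * ∑ i, hartley j i * hartley k i := by
          rw [Finset.sum_comm]
          refine Finset.sum_congr rfl fun j _ => ?_
          rw [Finset.sum_comm]
          simp only [Finset.mul_sum]
      _ = _ := by
          simp [hartley_orthogonal hn, sq]
  have h2 : ∑ j, x j ^ 2 ≤ n * C ^ 2 := by
    calc ∑ j, x j ^ 2 ≤ ∑ _j : Fin n, C ^ 2 :=
          Finset.sum_le_sum fun j _ => sq_le_sq' (abs_le.1 (hx j)).1 (abs_le.1 (hx j)).2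
      _ = _ := by simp
  refine abs_le_of_sq_le_sq' ?_ (by positivity) |>.2
  have h3 := sq_sum_le_card_mul_sum_sq (s := (Finset.univ : Finset (Fin n)))
    (f := fun i => |∑ j, hartley i j * x j|)
  simp only [sq_abs, Finset.card_univ, Fintype.card_fin] at h3
  rw [h1] at h3
  calc _ ≤ _ := h3
    _ ≤ n * (n * C ^ 2) := by gcongr
    _ = _ := by ring

/-! ### The lower bound for `ρ⁺(ℓ₁ⁿ)` -/

/-- The rows of `(1 + S) / (2 √n)`, `S` being the Hartley matrix. -/
noncomputable def row (k : Fin n) : L1 n :=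
  WithLp.toLp 1 fun i => ((if k = i then 1 else 0) + hartley k i) / (2 * Real.sqrt n)

/-- The non-negative tensor `∑ₖ row k ⊗ row k`. -/
noncomputable def tens (n : ℕ) : (L1 n →L[ℝ] ℝ) →L[ℝ] L1 n :=
  ∑ k, (ContinuousLinearMap.apply ℝ ℝ (row k : L1 n)).smulRight (row k)

lemma tens_apply (φ : L1 n →L[ℝ] ℝ) : tens n φ = ∑ k, φ (row k) • row k := by
  simp [tens]

/-- As `S² = 1` with `S` symmetric, `(1 + S)² = 2 (1 + S)`, so `tens n` has matrix
`(1 + S) / (2n)`. -/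
lemma entry_tens (hn : 0 < n) (a b : Fin n) :
    entry (tens n) a b = ((if a = b then 1 else 0) + hartley a b) / (2 * n) := by
  have hn' : (0 : ℝ) < n := by exact_mod_cast hn
  have h : ∀ k : Fin n, (row k : L1 n) b * (row k : L1 n) a =
      ((if k = b then 1 else 0) * (if k = a then 1 else 0)
        + (if k = b then 1 else 0) * hartley k a + (if k = a then 1 else 0) * hartley k b
        + hartley a k * hartley b k) / (4 * n) := by
    intro k
    simp only [row]
    rw [div_mul_div_comm, hartley_symm a k, hartley_symm b k, mul_mul_mul_comm,
      Real.mul_self_sqrt hn'.le]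
    ring
  rw [entry, tens_apply]
  simp only [pairing_dInf, WithLp.ofLp_sum, WithLp.ofLp_smul, Finset.sum_apply, Pi.smul_apply,
    smul_eq_mul, h]
  rw [← Finset.sum_div, Finset.sum_add_distrib, Finset.sum_add_distrib, Finset.sum_add_distrib,
    hartley_orthogonal hn]
  simp only [ite_mul, one_mul, zero_mul, Finset.sum_ite_eq', Finset.mem_univ, if_true,
    hartley_symm b a, eq_comm (a := b)]
  field_simp
  ring

lemma norm_tens_le (hn : 0 < n) : ‖tens n‖ ≤ 1 := by
  have hn' : (0 : ℝ) < n := by exact_mod_cast hn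
  refine ContinuousLinearMap.opNorm_le_bound _ zero_le_one fun φ => ?_
  have hx : ∀ b, |φ (d1 b)| ≤ ‖φ‖ := fun b => by
    simpa [norm_d1] using φ.le_opNorm (d1 b)
  have h1 : ∀ a, tens n φ a = (φ (d1 a) + ∑ b, hartley a b * φ (d1 b)) / (2 * n) := by
    intro a
    have : tens n φ a = ∑ b, φ (d1 b) * entry (tens n) a b := by
      conv_lhs => rw [sum_functional φ]
      simp [entry]
    simp only [this, entry_tens hn, mul_div_assoc', ← Finset.sum_div, mul_add,
      Finset.sum_add_distrib]
    simp [mul_comm]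
  rw [norm_L1, one_mul]
  simp only [h1, abs_div, ← Finset.sum_div]
  rw [abs_of_pos (by positivity : (0 : ℝ) < 2 * n), div_le_iff₀ (by positivity)]
  calc ∑ a, |φ (d1 a) + ∑ b, hartley a b * φ (d1 b)|
      ≤ ∑ a, (|φ (d1 a)| + |∑ b, hartley a b * φ (d1 b)|) :=
        Finset.sum_le_sum fun a _ => abs_add_le _ _
    _ ≤ n * ‖φ‖ + n * ‖φ‖ := by
        rw [Finset.sum_add_distrib]
        refine add_le_add ?_ (sum_abs_hartley_apply_le hn _ (norm_nonneg _) hx)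
        calc ∑ a, |φ (d1 a)| ≤ ∑ _a : Fin n, ‖φ‖ := Finset.sum_le_sum fun a _ => hx a
          _ = _ := by simp
    _ = _ := by ring

theorem le_rhoPlus (hn : 0 < n) : Real.sqrt n / 4 - 1 / 2 ≤ rhoPlus (L1 n) := by
  have hn' : (0 : ℝ) < n := by exact_mod_cast hn
  refine le_trans ?_ (le_csSup (bddAbove_rhoPlus n) ⟨tens n, ⟨n, row, tens_apply⟩,
    norm_tens_le hn, rfl⟩)
  let s : Fin n → Fin n → ℝ := fun a b => SignType.sign (hartley a b)
  have hs : ∀ a b, |s a b| ≤ 1 := by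
    intro a b
    rcases lt_trichotomy (hartley a b) 0 with h | h | h <;> simp [s, h]
  refine le_trans ?_ (entries_le_projNorm (tens n) s hs)
  have hrow : ∀ a, (Real.sqrt n / 2 - 1) / (2 * n) ≤ ∑ b, s a b * entry (tens n) a b := by
    intro a
    simp only [entry_tens hn, mul_div_assoc', ← Finset.sum_div]
    gcongr
    simp only [mul_add, Finset.sum_add_distrib]
    have h1 : ∑ b, s a b * hartley a b = ∑ b, |hartley a b| :=
      Finset.sum_congr rfl fun b _ => sign_mul_self _
    have h2 : ∑ b, s a b * (if a = b then 1 else 0) = s a a := by simp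
    rw [h1, h2]
    linarith [sum_abs_hartley hn a, (abs_le.1 (hs a a)).1]
  calc Real.sqrt n / 4 - 1 / 2 = ∑ _a : Fin n, (Real.sqrt n / 2 - 1) / (2 * n) := by
        simp only [Finset.sum_const, Finset.card_univ, Fintype.card_fin, nsmul_eq_mul]
        field_simp
        ring
    _ ≤ _ := Finset.sum_le_sum fun a _ => hrow a

end Statement17

/-- `K_G⁺(ℓ_∞ⁿ, ℓ_∞ⁿ) ≥ ρ⁺(ℓ₁ⁿ)`, and `ρ⁺(ℓ₁ⁿ) ≥ c√n` for large `n`. -/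
theorem statement17 :
    (∀ n : ℕ, 1 ≤ n →
      rhoPlus (PiLp 1 fun _ : Fin n => ℝ) ≤
        KGpos (PiLp ⊤ fun _ : Fin n => ℝ) (PiLp ⊤ fun _ : Fin n => ℝ)) ∧
    ∃ c > (0:ℝ), ∃ N : ℕ, ∀ n : ℕ, N ≤ n →
      c * Real.sqrt n ≤ rhoPlus (PiLp 1 fun _ : Fin n => ℝ) := by
  refine ⟨fun n _ => Statement17.rhoPlus_le_KGpos n, 1 / 8, by norm_num, 16, fun n hn => ?_⟩
  refine le_trans ?_ (Statement17.le_rhoPlus (by omega))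
  have : (4 : ℝ) ≤ Real.sqrt n := by
    apply Real.le_sqrt_of_sq_le
    have : (16 : ℝ) ≤ n := by exact_mod_cast hn
    linarith
  linarith
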